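/- arXiv:1406.6266 — 2 statements merged into one kernel-verified Lean document; each statement's English description precedes it below -/
import Mathlib

section
/- For every formula φ ∈ ML(⊻)(Φ) and every Kripke model K over Φ, |M(φ,K)| ≤ 2^(occ_⊻(φ)); hence Dim(φ) ≤ 2^(occ_⊻(φ)). -/
namespace MDLTeam

/-- A Kripke model over a set `Φ` of proposition symbols: a set `W` of worlds,
an accessibility relation `R` and a valuation `V`.  A team of `K` is a subset of `K.W`. -/
structure Kripke (Φ : Type) : Type 1 where
  W : Type
  R : W → W → Prop
  V : Φ → Set W

namespace Kripke

variable {Φ : Type}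

/-- `R[T] = {v | ∃ w ∈ T, w R v}` -/
def img (K : Kripke Φ) (T : Set K.W) : Set K.W := {v | ∃ w ∈ T, K.R w v}

/-- `R⁻¹[S] = {w | ∃ v ∈ S, w R v}` -/
def pre (K : Kripke Φ) (S : Set K.W) : Set K.W := {w | ∃ v ∈ S, K.R w v}

/-- `T[R]S` iff `S ⊆ R[T]` and `T ⊆ R⁻¹[S]`. -/
def trs (K : Kripke Φ) (T S : Set K.W) : Prop := S ⊆ K.img T ∧ T ⊆ K.pre S

end Kripke

/-- Formulas of modal logic `ML(Φ)` in negation normal form. -/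
inductive MLFrm (Φ : Type) : Type
  | atom (p : Φ)
  | natom (p : Φ)
  | and (φ ψ : MLFrm Φ)
  | or (φ ψ : MLFrm Φ)
  | dia (φ : MLFrm Φ)
  | box (φ : MLFrm Φ)
  deriving DecidableEq

namespace MLFrm

variable {Φ : Type}

/-- Team semantics for `ML`. -/
def sat (K : Kripke Φ) : MLFrm Φ → Set K.W → Prop
  | atom p, T => T ⊆ K.V p
  | natom p, T => T ∩ K.V p = ∅
  | and φ ψ, T => sat K φ T ∧ sat K ψ T
  | or φ ψ, T => ∃ T₁ T₂, T = T₁ ∪ T₂ ∧ sat K φ T₁ ∧ sat K ψ T₂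
  | dia φ, T => ∃ S, K.trs T S ∧ sat K φ S
  | box φ, T => sat K φ (K.img T)

/-- Standard (pointwise) Kripke semantics for `ML`. -/
def psat (K : Kripke Φ) : MLFrm Φ → K.W → Prop
  | atom p, w => w ∈ K.V p
  | natom p, w => w ∉ K.V p
  | and φ ψ, w => psat K φ w ∧ psat K ψ w
  | or φ ψ, w => psat K φ w ∨ psat K ψ w
  | dia φ, w => ∃ v, K.R w v ∧ psat K φ v
  | box φ, w => ∀ v, K.R w v → psat K φ v

/-- Modal depth. -/
def md : MLFrm Φ → ℕ
  | atom _ => 0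
  | natom _ => 0
  | and φ ψ => max (md φ) (md ψ)
  | or φ ψ => max (md φ) (md ψ)
  | dia φ => md φ + 1
  | box φ => md φ + 1

end MLFrm

/-- Formulas of `ML(⊻)(Φ)`: modal logic with intuitionistic disjunction. -/
inductive MLI (Φ : Type) : Type
  | atom (p : Φ)
  | natom (p : Φ)
  | and (φ ψ : MLI Φ)
  | or (φ ψ : MLI Φ)
  | dia (φ : MLI Φ)
  | box (φ : MLI Φ)
  | idis (φ ψ : MLI Φ)
  deriving DecidableEq

namespace MLI

variable {Φ : Type}

/-- Team semantics for `ML(⊻)`. -/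
def sat (K : Kripke Φ) : MLI Φ → Set K.W → Prop
  | atom p, T => T ⊆ K.V p
  | natom p, T => T ∩ K.V p = ∅
  | and φ ψ, T => sat K φ T ∧ sat K ψ T
  | or φ ψ, T => ∃ T₁ T₂, T = T₁ ∪ T₂ ∧ sat K φ T₁ ∧ sat K ψ T₂
  | dia φ, T => ∃ S, K.trs T S ∧ sat K φ S
  | box φ, T => sat K φ (K.img T)
  | idis φ ψ, T => sat K φ T ∨ sat K ψ T

/-- Modal depth. -/
def md : MLI Φ → ℕ
  | atom _ => 0
  | natom _ => 0
  | and φ ψ => max (md φ) (md ψ)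
  | or φ ψ => max (md φ) (md ψ)
  | dia φ => md φ + 1
  | box φ => md φ + 1
  | idis φ ψ => max (md φ) (md ψ)

/-- The number of occurrences of the connective `⊻` in a formula. -/
def occIdis : MLI Φ → ℕ
  | atom _ => 0
  | natom _ => 0
  | and φ ψ => occIdis φ + occIdis ψ
  | or φ ψ => occIdis φ + occIdis ψ
  | dia φ => occIdis φ
  | box φ => occIdis φ
  | idis φ ψ => occIdis φ + occIdis ψ + 1

/-- The number of symbols in a formula. -/
def size : MLI Φ → ℕ
  | atom _ => 1
  | natom _ => 2
  | and φ ψ => size φ + size ψ + 1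
  | or φ ψ => size φ + size ψ + 1
  | dia φ => size φ + 1
  | box φ => size φ + 1
  | idis φ ψ => size φ + size ψ + 1

end MLI

/-- Formulas of extended modal dependence logic `EMDL(Φ)`: `ML` extended by
dependence atoms `dep(ψ₁,…,ψₙ,θ)` with `ψ₁,…,ψₙ,θ ∈ ML(Φ)`. -/
inductive EMDL (Φ : Type) : Type
  | atom (p : Φ)
  | natom (p : Φ)
  | and (φ ψ : EMDL Φ)
  | or (φ ψ : EMDL Φ)
  | dia (φ : EMDL Φ)
  | box (φ : EMDL Φ)
  | dep (l : List (MLFrm Φ)) (θ : MLFrm Φ)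

namespace EMDL

variable {Φ : Type}

/-- Team semantics for `EMDL`. -/
def sat (K : Kripke Φ) : EMDL Φ → Set K.W → Prop
  | atom p, T => T ⊆ K.V p
  | natom p, T => T ∩ K.V p = ∅
  | and φ ψ, T => sat K φ T ∧ sat K ψ T
  | or φ ψ, T => ∃ T₁ T₂, T = T₁ ∪ T₂ ∧ sat K φ T₁ ∧ sat K ψ T₂
  | dia φ, T => ∃ S, K.trs T S ∧ sat K φ S
  | box φ, T => sat K φ (K.img T)
  | dep l θ, T => ∀ w ∈ T, ∀ v ∈ T,
      (∀ ψ ∈ l, (MLFrm.sat K ψ {w} ↔ MLFrm.sat K ψ {v})) →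
      (MLFrm.sat K θ {w} ↔ MLFrm.sat K θ {v})

end EMDL

/-- `k`-bisimilarity of pointed models. -/
def bisim {Φ : Type} (K K' : Kripke Φ) : ℕ → K.W → K'.W → Prop
  | 0, w, w' => ∀ p, w ∈ K.V p ↔ w' ∈ K'.V p
  | k + 1, w, w' =>
      (∀ p, w ∈ K.V p ↔ w' ∈ K'.V p) ∧
      (∀ v, K.R w v → ∃ v', K'.R w' v' ∧ bisim K K' k v v') ∧
      (∀ v', K'.R w' v' → ∃ v, K.R w v ∧ bisim K K' k v v')

/-- Team `k`-bisimilarity: `K,T ⇌ₖ K',T'`. -/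
def tbisim {Φ : Type} (K K' : Kripke Φ) (k : ℕ) (T : Set K.W) (T' : Set K'.W) : Prop :=
  (∀ w ∈ T, ∃ w' ∈ T', bisim K K' k w w') ∧
  (∀ w' ∈ T', ∃ w ∈ T, bisim K K' k w w')

/-- `M(φ,K)`: the set of maximal teams satisfying `φ` in `K` (for `ML(⊻)`). -/
def MLI.Mset {Φ : Type} (K : Kripke Φ) (φ : MLI Φ) : Set (Set K.W) :=
  {T | MLI.sat K φ T ∧ ∀ S, MLI.sat K φ S → T ⊆ S → S = T}

/-- `N(φ,K)`: the family of minimal teams not satisfying `φ` in `K` (for `ML(⊻)`). -/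
def MLI.Nset {Φ : Type} (K : Kripke Φ) (φ : MLI Φ) : Set (Set K.W) :=
  {T | ¬ MLI.sat K φ T ∧ ∀ S, ¬ MLI.sat K φ S → S ⊆ T → S = T}

/-- The upper dimension `Dim(φ)` of an `ML(⊻)`-formula: the least `m` such that
`|M(φ,K)| ≤ m` for every Kripke model `K` over `Φ`. -/
noncomputable def MLI.Dim {Φ : Type} (φ : MLI Φ) : ℕ :=
  sInf {m : ℕ | ∀ K : Kripke Φ, (MLI.Mset K φ).Finite ∧ (MLI.Mset K φ).ncard ≤ m}

/-- The lower dimension `dim(φ)` of an `ML(⊻)`-formula: the least `n` such that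
`|T| ≤ n` for every Kripke model `K` over `Φ` and every `T ∈ N(φ,K)`. -/
noncomputable def MLI.ldim {Φ : Type} (φ : MLI Φ) : ℕ :=
  sInf {n : ℕ | ∀ K : Kripke Φ, ∀ T ∈ MLI.Nset K φ, T.Finite ∧ T.ncard ≤ n}

/-- `M(φ,K)`: the set of maximal teams satisfying `φ` in `K` (for `EMDL`). -/
def EMDL.Mset {Φ : Type} (K : Kripke Φ) (φ : EMDL Φ) : Set (Set K.W) :=
  {T | EMDL.sat K φ T ∧ ∀ S, EMDL.sat K φ S → T ⊆ S → S = T}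

/-- The upper dimension `Dim(φ)` of an `EMDL`-formula. -/
noncomputable def EMDL.Dim {Φ : Type} (φ : EMDL Φ) : ℕ :=
  sInf {m : ℕ | ∀ K : Kripke Φ, (EMDL.Mset K φ).Finite ∧ (EMDL.Mset K φ).ncard ≤ m}

/-- The `Ψ`-type of a state: `type_Ψ(K,w) = {ψ ∈ Ψ | K,w ⊨ ψ}`. -/
def typeSet {Φ : Type} (K : Kripke Φ) (Ψ : Set (MLFrm Φ)) (w : K.W) : Set (MLFrm Φ) :=
  {ψ | ψ ∈ Ψ ∧ MLFrm.psat K ψ w}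

/-- `tset_Ψ(K,T) = {type_Ψ(K,w) | w ∈ T}`. -/
def tset {Φ : Type} (K : Kripke Φ) (Ψ : Set (MLFrm Φ)) (T : Set K.W) : Set (Set (MLFrm Φ)) :=
  typeSet K Ψ '' T


open Classical in
/-- `‖φ‖^K` is generated by at most `2^(occ φ)` teams: it is the union of their power sets. -/
theorem exists_generators {Φ : Type} (K : Kripke Φ) (φ : MLI Φ) :
    ∃ F : Finset (Set K.W), F.card ≤ 2 ^ MLI.occIdis φ ∧
      ∀ T, MLI.sat K φ T ↔ ∃ A ∈ F, T ⊆ A := by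
  induction φ with
  | atom p => exact ⟨{K.V p}, by simp [MLI.occIdis], fun T => by simp [MLI.sat]⟩
  | natom p =>
    refine ⟨{(K.V p)ᶜ}, by simp [MLI.occIdis], fun T => ?_⟩
    simp [MLI.sat, Set.subset_compl_iff_disjoint_right, Set.disjoint_iff_inter_eq_empty]
  | and φ ψ ih₁ ih₂ =>
    obtain ⟨F, hF, h₁⟩ := ih₁
    obtain ⟨G, hG, h₂⟩ := ih₂
    refine ⟨Finset.image₂ (fun A B => A ∩ B) F G, ?_, fun T => ?_⟩
    · rw [MLI.occIdis, pow_add]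
      exact (Finset.card_image₂_le _ _ _).trans (Nat.mul_le_mul hF hG)
    · simp only [MLI.sat, h₁, h₂, Finset.mem_image₂]
      constructor
      · rintro ⟨⟨A, hA, hTA⟩, B, hB, hTB⟩
        exact ⟨_, ⟨A, hA, B, hB, rfl⟩, Set.subset_inter hTA hTB⟩
      · rintro ⟨_, ⟨A, hA, B, hB, rfl⟩, hT⟩
        exact ⟨⟨A, hA, fun x hx => (hT hx).1⟩, B, hB, fun x hx => (hT hx).2⟩
  | or φ ψ ih₁ ih₂ =>
    obtain ⟨F, hF, h₁⟩ := ih₁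
    obtain ⟨G, hG, h₂⟩ := ih₂
    refine ⟨Finset.image₂ (fun A B => A ∪ B) F G, ?_, fun T => ?_⟩
    · rw [MLI.occIdis, pow_add]
      exact (Finset.card_image₂_le _ _ _).trans (Nat.mul_le_mul hF hG)
    · simp only [MLI.sat, h₁, h₂, Finset.mem_image₂]
      constructor
      · rintro ⟨T₁, T₂, rfl, ⟨A, hA, hTA⟩, B, hB, hTB⟩
        exact ⟨_, ⟨A, hA, B, hB, rfl⟩, Set.union_subset_union hTA hTB⟩
      · rintro ⟨_, ⟨A, hA, B, hB, rfl⟩, hT⟩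
        refine ⟨T ∩ A, T ∩ B, ?_, ⟨A, hA, Set.inter_subset_right⟩, B, hB,
          Set.inter_subset_right⟩
        rw [← Set.inter_union_distrib_left, Set.inter_eq_left.mpr hT]
  | dia φ ih =>
    obtain ⟨F, hF, h⟩ := ih
    refine ⟨F.image K.pre, Finset.card_image_le.trans hF, fun T => ?_⟩
    simp only [MLI.sat, h, Finset.mem_image]
    constructor
    · rintro ⟨S, hTS, A, hA, hSA⟩
      refine ⟨_, ⟨A, hA, rfl⟩, fun w hw => ?_⟩
      obtain ⟨v, hv, hwv⟩ := hTS.2 hw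
      exact ⟨v, hSA hv, hwv⟩
    · rintro ⟨_, ⟨A, hA, rfl⟩, hT⟩
      refine ⟨K.img T ∩ A, ⟨Set.inter_subset_left, fun w hw => ?_⟩, A, hA,
        Set.inter_subset_right⟩
      obtain ⟨v, hv, hwv⟩ := hT hw
      exact ⟨v, ⟨⟨w, hw, hwv⟩, hv⟩, hwv⟩
  | box φ ih =>
    obtain ⟨F, hF, h⟩ := ih
    refine ⟨F.image (fun A => {w | ∀ v, K.R w v → v ∈ A}),
      Finset.card_image_le.trans hF, fun T => ?_⟩
    simp only [MLI.sat, h, Finset.mem_image]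
    constructor
    · rintro ⟨A, hA, hTA⟩
      exact ⟨_, ⟨A, hA, rfl⟩, fun w hw v hwv => hTA ⟨w, hw, hwv⟩⟩
    · rintro ⟨_, ⟨A, hA, rfl⟩, hT⟩
      refine ⟨A, hA, ?_⟩
      rintro v ⟨w, hw, hwv⟩
      exact hT hw v hwv
  | idis φ ψ ih₁ ih₂ =>
    obtain ⟨F, hF, h₁⟩ := ih₁
    obtain ⟨G, hG, h₂⟩ := ih₂
    refine ⟨F ∪ G, ?_, fun T => ?_⟩
    · have hle := Finset.card_union_le F G
      have a := Nat.pow_le_pow_right (n := 2) (by norm_num)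
        (Nat.le_add_right (MLI.occIdis φ) (MLI.occIdis ψ))
      have b := Nat.pow_le_pow_right (n := 2) (by norm_num)
        (Nat.le_add_left (MLI.occIdis ψ) (MLI.occIdis φ))
      rw [MLI.occIdis, pow_succ]
      omega
    · simp only [MLI.sat, h₁, h₂, Finset.mem_union, or_and_right, exists_or]

/-- For every `φ ∈ ML(⊻)(Φ)` and Kripke model `K`,
`|M(φ,K)| ≤ 2^(occ_⊻(φ))`; hence `Dim(φ) ≤ 2^(occ_⊻(φ))`. -/
theorem dim_le_two_pow_occ {Φ : Type} (φ : MLI Φ) :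
    (∀ K : Kripke Φ, (MLI.Mset K φ).Finite ∧ (MLI.Mset K φ).ncard ≤ 2 ^ MLI.occIdis φ) ∧
    MLI.Dim φ ≤ 2 ^ MLI.occIdis φ := by
  have key : ∀ K : Kripke Φ,
      (MLI.Mset K φ).Finite ∧ (MLI.Mset K φ).ncard ≤ 2 ^ MLI.occIdis φ := by
    intro K
    obtain ⟨F, hF, h⟩ := exists_generators K φ
    have hsub : MLI.Mset K φ ⊆ (F : Set (Set K.W)) := by
      rintro T ⟨hT, hmax⟩
      obtain ⟨A, hA, hTA⟩ := (h T).1 hT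
      have hAT : A = T := hmax A ((h A).2 ⟨A, hA, subset_rfl⟩) hTA
      exact hAT ▸ hA
    refine ⟨F.finite_toSet.subset hsub, ?_⟩
    have hn := Set.ncard_le_ncard hsub F.finite_toSet
    rw [Set.ncard_coe_finset] at hn
    exact hn.trans hF
  exact ⟨key, Nat.sInf_le key⟩

end MDLTeam
end

section
/- Let p₁,…,pₙ,q ∈ Φ be n+1 distinct proposition symbols. If φ ∈ ML(⊻)(Φ) is a formula such that ‖φ‖ = ‖dep(p₁,…,pₙ,q)‖ (i.e., for every Kripke model K over Φ and team T of K, K,T ⊨ φ iff K,T ⊨ dep(p₁,…,pₙ,q)), then occ_⊻(φ) ≥ 2^n; in particular, φ contains more than 2^n symbols. -/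
namespace MDLTeam

theorem MLI.occ_lt_size {Φ : Type} (φ : MLI Φ) : MLI.occIdis φ < MLI.size φ := by
  induction φ <;> simp only [MLI.occIdis, MLI.size] <;> omega

theorem MLI.exists_family {Φ : Type} (K : Kripke Φ) (φ : MLI Φ) :
    ∃ (ι : Type) (_ : Fintype ι) (F : ι → Set K.W), Fintype.card ι ≤ 2 ^ MLI.occIdis φ ∧
      ∀ T, MLI.sat K φ T ↔ ∃ i, T ⊆ F i := by
  induction φ with
  | atom p => exact ⟨Unit, inferInstance, fun _ => K.V p, by simp [MLI.occIdis], by simp [MLI.sat]⟩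
  | natom p =>
    refine ⟨Unit, inferInstance, fun _ => (K.V p)ᶜ, by simp [MLI.occIdis], fun T => ?_⟩
    simp [MLI.sat, Set.subset_compl_iff_disjoint_right, Set.disjoint_iff_inter_eq_empty]
  | and φ ψ ih1 ih2 =>
    obtain ⟨ι, _, F, hF, h1⟩ := ih1
    obtain ⟨κ, _, G, hG, h2⟩ := ih2
    refine ⟨ι × κ, inferInstance, fun x => F x.1 ∩ G x.2, ?_, fun T => ?_⟩
    · rw [Fintype.card_prod, MLI.occIdis, pow_add]; exact Nat.mul_le_mul hF hG
    · simp [MLI.sat, h1, h2]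
  | or φ ψ ih1 ih2 =>
    obtain ⟨ι, _, F, hF, h1⟩ := ih1
    obtain ⟨κ, _, G, hG, h2⟩ := ih2
    refine ⟨ι × κ, inferInstance, fun x => F x.1 ∪ G x.2, ?_, fun T => ?_⟩
    · rw [Fintype.card_prod, MLI.occIdis, pow_add]; exact Nat.mul_le_mul hF hG
    · simp only [MLI.sat, h1, h2]
      constructor
      · rintro ⟨A, B, rfl, ⟨i, hi⟩, ⟨j, hj⟩⟩
        exact ⟨(i, j), Set.union_subset_union hi hj⟩
      · rintro ⟨⟨i, j⟩, h⟩
        refine ⟨T ∩ F i, T ∩ G j, ?_, ⟨i, Set.inter_subset_right⟩, ⟨j, Set.inter_subset_right⟩⟩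
        rw [← Set.inter_union_distrib_left]
        exact (Set.inter_eq_left.2 h).symm
  | dia φ ih =>
    obtain ⟨ι, _, F, hF, h1⟩ := ih
    refine ⟨ι, inferInstance, fun x => K.pre (F x), hF, fun T => ?_⟩
    simp only [MLI.sat, h1]
    constructor
    · rintro ⟨S, ⟨_, hS⟩, i, hi⟩
      refine ⟨i, fun w hw => ?_⟩
      obtain ⟨v, hv, hr⟩ := hS hw
      exact ⟨v, hi hv, hr⟩
    · rintro ⟨i, hi⟩
      refine ⟨K.img T ∩ F i, ⟨Set.inter_subset_left, fun w hw => ?_⟩, i, Set.inter_subset_right⟩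
      obtain ⟨v, hv, hr⟩ := hi hw
      exact ⟨v, ⟨⟨w, hw, hr⟩, hv⟩, hr⟩
  | box φ ih =>
    obtain ⟨ι, _, F, hF, h1⟩ := ih
    refine ⟨ι, inferInstance, fun x => {w | ∀ v, K.R w v → v ∈ F x}, hF, fun T => ?_⟩
    simp only [MLI.sat, h1]
    constructor
    · rintro ⟨i, hi⟩
      exact ⟨i, fun w hw v hr => hi ⟨w, hw, hr⟩⟩
    · rintro ⟨i, hi⟩
      refine ⟨i, ?_⟩
      rintro v ⟨w, hw, hr⟩
      exact hi hw v hr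
  | idis φ ψ ih1 ih2 =>
    obtain ⟨ι, _, F, hF, h1⟩ := ih1
    obtain ⟨κ, _, G, hG, h2⟩ := ih2
    refine ⟨ι ⊕ κ, inferInstance, Sum.elim F G, ?_, fun T => ?_⟩
    · rw [Fintype.card_sum, MLI.occIdis, pow_succ, pow_add]
      have a := Nat.one_le_two_pow (n := MLI.occIdis φ)
      have b := Nat.one_le_two_pow (n := MLI.occIdis ψ)
      nlinarith
    · simp [MLI.sat, h1, h2]

/-- The model on all assignments, with no transitions. -/
def cubeModel {Φ : Type} (n : ℕ) (ps : Fin n → Φ) (q : Φ) : Kripke Φ where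
  W := (Fin n → Bool) × Bool
  R := fun _ _ => False
  V := fun p => {w | (∃ i, ps i = p ∧ w.1 i = true) ∨ (p = q ∧ w.2 = true)}

/-- If `φ ∈ ML(⊻)(Φ)` defines the same class as the dependence atom
`dep(p₁,…,pₙ,q)` on `n+1` distinct proposition symbols, then `occ_⊻(φ) ≥ 2^n`;
in particular `φ` contains more than `2^n` symbols. -/
theorem emdl_to_mli_blowup {Φ : Type} (n : ℕ) (ps : Fin n → Φ) (q : Φ)
    (hinj : Function.Injective ps) (hq : ∀ i, ps i ≠ q) (φ : MLI Φ)
    (hφ : ∀ (K : Kripke Φ) (T : Set K.W),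
      MLI.sat K φ T ↔
        EMDL.sat K (EMDL.dep (List.ofFn fun i => MLFrm.atom (ps i)) (MLFrm.atom q)) T) :
    2 ^ n ≤ MLI.occIdis φ ∧ 2 ^ n < MLI.size φ := by
  have hocc : 2 ^ n ≤ MLI.occIdis φ := by
    let K := cubeModel n ps q
    have hVp : ∀ (w : K.W) i, w ∈ K.V (ps i) ↔ w.1 i = true := by
      intro w i
      change ((∃ j, ps j = ps i ∧ w.1 j = true) ∨ (ps i = q ∧ w.2 = true)) ↔ _
      simp [hq, hinj.eq_iff]
    have hVq : ∀ (w : K.W), w ∈ K.V q ↔ w.2 = true := by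
      intro w
      change ((∃ j, ps j = q ∧ w.1 j = true) ∨ (q = q ∧ w.2 = true)) ↔ _
      simp [hq]
    have hdep : ∀ T : Set K.W, MLI.sat K φ T ↔ ∀ w ∈ T, ∀ v ∈ T, w.1 = v.1 → w.2 = v.2 := by
      intro T
      rw [hφ]
      simp only [EMDL.sat, List.forall_mem_ofFn_iff, MLFrm.sat, Set.singleton_subset_iff, hVp, hVq,
        ← Bool.eq_iff_iff, funext_iff]
    obtain ⟨ι, _, F, hF, h⟩ := MLI.exists_family K φ
    have h1 : ∀ f : (Fin n → Bool) → Bool, ∃ i, {w : K.W | w.2 = f w.1} ⊆ F i := by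
      intro f
      rw [← h, hdep]
      intro w hw v hv e
      rw [Set.mem_setOf_eq] at hw hv
      rw [hw, hv, e]
    choose g hg using h1
    have hginj : Function.Injective g := by
      intro f f' e
      have hs := (hdep (F (g f))).1 ((h _).2 ⟨_, subset_rfl⟩)
      funext x
      exact hs (x, f x) (hg f rfl) (x, f' x) (e ▸ hg f' rfl) rfl
    have hc := (Fintype.card_le_of_injective g hginj).trans hF
    simp only [Fintype.card_fun, Fintype.card_bool, Fintype.card_fin] at hc
    exact (Nat.pow_le_pow_iff_right (by norm_num)).1 hc
  exact ⟨hocc, hocc.trans_lt (MLI.occ_lt_size φ)⟩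


end MDLTeam
end
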